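/- Let C be a regular, irreducible curve that is projective over a field k, with function field F = k(C), arithmetic genus t, and a k-rational point O. For every integer d ≥ 3t + 1, the tame symbol induces an isomorphism K₂(F) / F_{d−1} ≅ ∐_{O ≠ P ∈ C_{≥d}} k(P)^*. -/

import Mathlib

open scoped TensorProduct

noncomputable section

/-- The set of Steinberg relations in `Fˣ ⊗_ℤ Fˣ` (written additively):
the elements `a ⊗ b` with `a + b = 1` in `F`. -/
def SteinbergSet (F : Type*) [Field F] :
    Set (TensorProduct ℤ (Additive Fˣ) (Additive Fˣ)) :=
  { x | ∃ a b : Fˣ, (a : F) + (b : F) = 1 ∧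
      x = Additive.ofMul a ⊗ₜ[ℤ] Additive.ofMul b }

/-- Milnor's `K₂` of a field, via Matsumoto's presentation. -/
abbrev K2 (F : Type*) [Field F] :=
  (TensorProduct ℤ (Additive Fˣ) (Additive Fˣ)) ⧸
    Submodule.span ℤ (SteinbergSet F)

/-- The symbol `{f, g}` in `K₂(F)`. -/
def symbol {F : Type*} [Field F] (f g : Fˣ) : K2 F :=
  Submodule.Quotient.mk (Additive.ofMul f ⊗ₜ[ℤ] Additive.ofMul g)

/-- The degree of a divisor `D` on the curve: `∑_P deg(P) · D(P)`,
where `deg P = [k(P) : k]`. -/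
def divDeg (k : Type*) [Field k] {Pt : Type*} (res : Pt → Type*)
    [∀ P, Field (res P)] [∀ P, Algebra k (res P)] (D : Pt →₀ ℤ) : ℤ :=
  ∑ᶠ P, (Module.finrank k (res P) : ℤ) * D P

/-- Axioms for a regular, irreducible curve `C`, projective over a field `k`, with
`H⁰(C, O_C) = k`, presented through: its function field `F = k(C)`, its set `Pt` of
closed points, the residue fields `res P = k(P)`, the normalized valuations `ord P`,
the evaluation maps `ev P` (evaluation at `P` of functions regular at `P`), the
Riemann-Roch spaces `L D = H⁰(C, O_C(D))`, and the arithmetic genus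
`t = dim_k H¹(C, O_C)`, characterized by the Riemann-Roch relations. -/
structure IsProjCurve (k F : Type*) [Field k] [Field F] [Algebra k F]
    {Pt : Type*} (res : Pt → Type*) [∀ P, Field (res P)] [∀ P, Algebra k (res P)]
    (ord : Pt → F → ℤ) (ev : ∀ P, F → res P)
    (L : (Pt →₀ ℤ) → Submodule k F) (t : ℕ) : Prop where
  finiteDimensional_res : ∀ P, FiniteDimensional k (res P)
  ord_mul : ∀ P (f g : F), f ≠ 0 → g ≠ 0 → ord P (f * g) = ord P f + ord P g
  ord_add : ∀ P (f g : F), f ≠ 0 → g ≠ 0 → f + g ≠ 0 →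
      min (ord P f) (ord P g) ≤ ord P (f + g)
  ord_algebraMap : ∀ P (c : k), c ≠ 0 → ord P (algebraMap k F c) = 0
  ord_uniformizer : ∀ P, ∃ f : F, f ≠ 0 ∧ ord P f = 1
  ord_separates : ∀ P Q, (∀ f : F, ord P f = ord Q f) → P = Q
  support_finite : ∀ f : F, f ≠ 0 → {P | ord P f ≠ 0}.Finite
  degree_formula : ∀ f : F, f ≠ 0 →
      ∑ᶠ P, (Module.finrank k (res P) : ℤ) * ord P f = 0
  ev_zero : ∀ P, ev P 0 = 0
  ev_one : ∀ P, ev P 1 = 1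
  ev_add : ∀ P (f g : F), f ≠ 0 → g ≠ 0 → 0 ≤ ord P f → 0 ≤ ord P g →
      ev P (f + g) = ev P f + ev P g
  ev_mul : ∀ P (f g : F), f ≠ 0 → g ≠ 0 → 0 ≤ ord P f → 0 ≤ ord P g →
      ev P (f * g) = ev P f * ev P g
  ev_algebraMap : ∀ P (c : k), ev P (algebraMap k F c) = algebraMap k (res P) c
  ev_eq_zero_iff : ∀ P (f : F), f ≠ 0 → 0 ≤ ord P f → (ev P f = 0 ↔ 0 < ord P f)
  ev_surjective : ∀ P (y : res P), ∃ f : F, f ≠ 0 ∧ 0 ≤ ord P f ∧ ev P f = y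
  mem_L : ∀ (D : Pt →₀ ℤ) (f : F), f ∈ L D ↔ (f ≠ 0 → ∀ P, 0 ≤ D P + ord P f)
  finiteDimensional_L : ∀ D, FiniteDimensional k (L D)
  global_sections : ∀ f : F, f ∈ L 0 ↔ ∃ c : k, algebraMap k F c = f
  rr_ineq : ∀ D : Pt →₀ ℤ,
      divDeg k res D + 1 - t ≤ (Module.finrank k (L D) : ℤ)
  rr_eq : ∀ D : Pt →₀ ℤ, 2 * (t : ℤ) - 2 < divDeg k res D →
      (Module.finrank k (L D) : ℤ) = divDeg k res D + 1 - t

/-- `T` is the tame symbol `K₂(F) → ∐_{P} k(P)^*`: it is determined by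
`T_P({f,g}) = (-1)^{ord_P(f)·ord_P(g)} (f^{ord_P(g)} / g^{ord_P(f)})(P)`. -/
def IsTameSymbol {F : Type*} [Field F] {Pt : Type*} {res : Pt → Type*}
    [∀ P, Field (res P)]
    (ord : Pt → F → ℤ) (ev : ∀ P, F → res P)
    (T : K2 F →+ Π₀ P : Pt, Additive ((res P)ˣ)) : Prop :=
  ∀ (f g : Fˣ) (P : Pt),
    ((Additive.toMul (T (symbol f g) P) : (res P)ˣ) : res P) =
      ev P (((-1 : Fˣ) ^ (ord P (f : F) * ord P (g : F)) *
        f ^ (ord P (g : F)) * g ^ (-ord P (f : F)) : Fˣ) : F)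

/-- `F_d`: the subgroup of `K₂(F)` generated by the symbols `{f, g}` with
`|(f)| ∪ |(g)| ⊆ C_{≤ d}`. -/
def Fsub (k : Type*) [Field k] {F : Type*} [Field F] {Pt : Type*} (res : Pt → Type*)
    [∀ P, Field (res P)] [∀ P, Algebra k (res P)]
    (ord : Pt → F → ℤ) (d : ℕ) : AddSubgroup (K2 F) :=
  AddSubgroup.closure
    { x | ∃ f g : Fˣ,
        (∀ P, ord P (f : F) ≠ 0 → Module.finrank k (res P) ≤ d) ∧
        (∀ P, ord P (g : F) ≠ 0 → Module.finrank k (res P) ≤ d) ∧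
        x = symbol f g }

/-!
Fix `e > 3t`, call the points of degree less than `e` and the point `O` low, and call a function
low when all its zeros and poles are. Riemann–Roch makes the spaces `L(nO)` with `n < e` so large
that every nonzero residue at a point `P` of degree `e` has the form `(a / b)(P)` with `a`, `b`
low in `L((e - 1)O)`. Let `π` be a uniformizer at `P` whose other zeros and poles are low. If
`f` and `g` have the same residue at `P`, then `f - g = π u`, and when the poles at `O` are small
`u` is low, so the Steinberg relation for `f / g` turns `{f / g, π}` into a symbol of low
functions. Hence, modulo such symbols, `{a / b, π}` depends only on the residue `(a / b)(P)`, and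
additively so. This extends to all low functions in place of `a / b`, because those in
`L((e + t)O)` generate them. The resulting homomorphisms invert the tame symbol at the points of
degree `e`, and the theorem follows by induction on the degree.
-/

section Symbols

variable {F : Type*} [Field F]

theorem symbol_mul_left (f g h : Fˣ) : symbol (f * g) h = symbol f h + symbol g h := by
  simp only [symbol, ofMul_mul, TensorProduct.add_tmul, Submodule.Quotient.mk_add]

theorem symbol_mul_right (f g h : Fˣ) : symbol f (g * h) = symbol f g + symbol f h := by
  simp only [symbol, ofMul_mul, TensorProduct.tmul_add, Submodule.Quotient.mk_add]

theorem symbol_one_left (h : Fˣ) : symbol 1 h = 0 := by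
  simpa using symbol_mul_left 1 1 h

theorem symbol_one_right (h : Fˣ) : symbol h 1 = 0 := by
  simpa using symbol_mul_right h 1 1

theorem symbol_inv_left (f h : Fˣ) : symbol f⁻¹ h = -symbol f h := by
  rw [eq_neg_iff_add_eq_zero, ← symbol_mul_left, inv_mul_cancel, symbol_one_left]

theorem symbol_inv_right (f h : Fˣ) : symbol f h⁻¹ = -symbol f h := by
  rw [eq_neg_iff_add_eq_zero, ← symbol_mul_right, inv_mul_cancel, symbol_one_right]

theorem symbol_eq_zero_of_add_eq_one {a b : Fˣ} (h : (a : F) + b = 1) : symbol a b = 0 :=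
  (Submodule.Quotient.mk_eq_zero _).2 (Submodule.subset_span ⟨a, b, h, rfl⟩)

theorem symbol_self_neg (f : Fˣ) : symbol f (-f) = 0 := by
  by_cases hf : f = 1
  · rw [hf, symbol_one_left]
  have h₁ : (1 : F) - f ≠ 0 := fun h => hf (Units.ext (by simpa using (sub_eq_zero.1 h).symm))
  have h₂ : (1 : F) - ((f⁻¹ : Fˣ) : F) ≠ 0 := fun h =>
    hf (inv_eq_one.1 (Units.ext (by simpa using (sub_eq_zero.1 h).symm)))
  have e : -f = Units.mk0 _ h₁ * (Units.mk0 _ h₂)⁻¹ := by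
    rw [eq_mul_inv_iff_mul_eq]
    ext
    simp [mul_sub]
  rw [e, symbol_mul_right, symbol_inv_right, symbol_eq_zero_of_add_eq_one (a := f) (by simp),
    ← symbol_inv_left, symbol_eq_zero_of_add_eq_one (a := f⁻¹) (by simp), add_zero]

theorem symbol_self (f : Fˣ) : symbol f f = symbol f (-1) := by
  have h := symbol_mul_right f (-1) (-f)
  rwa [symbol_self_neg, add_zero, neg_mul_neg, one_mul] at h

theorem symbol_swap (f g : Fˣ) : symbol f g = -symbol g f := by
  have h := symbol_self_neg (f * g)
  have e₁ : -(f * g) = f * -g := by simp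
  have e₂ : f * -g = -f * g := by simp
  rw [e₁, symbol_mul_left, symbol_mul_right g f, symbol_self_neg, e₂, symbol_mul_right f,
    symbol_self_neg, zero_add, add_zero] at h
  exact eq_neg_of_add_eq_zero_left h

/-- When `f - g = p * u`, the relation `f / g + p * (-u / g) = 1` makes `{f / g, p * (-u / g)}`
vanish. -/
theorem symbol_div_eq_of_sub_eq_mul {f g p u : Fˣ} (h : (f : F) - g = p * u) :
    symbol (f / g) p = symbol (f / g) (-g / u) := by
  have hsum : ((f / g : Fˣ) : F) + (p * (-u / g) : Fˣ) = 1 := by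
    have hg := g.ne_zero
    push_cast
    field_simp
    linear_combination h
  have hzero := symbol_eq_zero_of_add_eq_one hsum
  rw [symbol_mul_right] at hzero
  rw [eq_neg_of_add_eq_zero_left hzero, ← symbol_inv_right, inv_div, div_neg, neg_div]

theorem symbol_mem_of_mem_closure {S : Set Fˣ} {X : AddSubgroup (K2 F)}
    (h : ∀ f ∈ S, ∀ g ∈ S, symbol f g ∈ X) {f g : Fˣ} (hf : f ∈ Subgroup.closure S)
    (hg : g ∈ Subgroup.closure S) : symbol f g ∈ X := by
  induction hf, hg using Subgroup.closure_induction₂ with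
  | mem f g hf hg => exact h f hf g hg
  | one_left g => rw [symbol_one_left]; exact X.zero_mem
  | one_right f => rw [symbol_one_right]; exact X.zero_mem
  | mul_left f₁ f₂ g _ _ _ h₁ h₂ => rw [symbol_mul_left]; exact X.add_mem h₁ h₂
  | mul_right g₁ g₂ f _ _ _ h₁ h₂ => rw [symbol_mul_right]; exact X.add_mem h₁ h₂
  | inv_left f g _ _ h => rw [symbol_inv_left]; exact X.neg_mem h
  | inv_right f g _ _ h => rw [symbol_inv_right]; exact X.neg_mem h

end Symbols

section LinearAlgebra

open Module

theorem finrank_add_finrank_le_finrank_inf_comap {k M N : Type*} [Field k] [AddCommGroup M]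
    [Module k M] [FiniteDimensional k M] [AddCommGroup N] [Module k N] (e : M ≃ₗ[k] N)
    (V : Submodule k M) (W : Submodule k N) :
    finrank k V + finrank k W ≤ finrank k ↥(V ⊓ W.comap (e : M →ₗ[k] N)) + finrank k M := by
  have hcomap : finrank k (W.comap (e : M →ₗ[k] N)) = finrank k W := by
    rw [Submodule.comap_equiv_eq_map_symm, LinearEquiv.finrank_map_eq]
  have hsup := (V ⊔ W.comap (e : M →ₗ[k] N)).finrank_le
  have := Submodule.finrank_sup_add_finrank_inf_eq V (W.comap (e : M →ₗ[k] N))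
  omega

variable {k K : Type*} [Field k] [Field K] [Algebra k K] [FiniteDimensional k K]
  {U V W : Submodule k K} {y z : K}

theorem exists_mul_mem_mul_mem (hy : y ≠ 0) (hz : z ≠ 0)
    (h : 2 * finrank k K < finrank k U + finrank k V + finrank k W) :
    ∃ b ∈ U, b ≠ 0 ∧ y * b ∈ V ∧ z * b ∈ W := by
  let mulEquiv {x : K} (hx : x ≠ 0) : K ≃ₗ[k] K :=
    (LinearEquiv.smulOfNeZero K K x hx).restrictScalars k
  have hV := finrank_add_finrank_le_finrank_inf_comap (mulEquiv hy) U V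
  have hW := finrank_add_finrank_le_finrank_inf_comap (mulEquiv hz)
    (U ⊓ V.comap (mulEquiv hy).toLinearMap) W
  obtain ⟨b, ⟨⟨hbU, hbV⟩, hbW⟩, hb⟩ := Submodule.exists_mem_ne_zero_of_ne_bot
    (Submodule.one_le_finrank_iff.1 (show 1 ≤ finrank k ↥((U ⊓ V.comap (mulEquiv hy).toLinearMap) ⊓
      W.comap (mulEquiv hz).toLinearMap) by omega))
  exact ⟨b, hbU, hb, hbV, hbW⟩

theorem exists_mul_mem (hy : y ≠ 0) (h : finrank k K < finrank k U + finrank k V) :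
    ∃ b ∈ U, b ≠ 0 ∧ y * b ∈ V := by
  have htop : finrank k (⊤ : Submodule k K) = finrank k K := finrank_top k K
  obtain ⟨b, hbU, hb, hbV, -⟩ :=
    exists_mul_mem_mul_mem (U := U) (V := V) (W := ⊤) hy one_ne_zero (by omega)
  exact ⟨b, hbU, hb, hbV⟩

end LinearAlgebra

section Divisors

variable {k : Type*} [Field k] {Pt : Type*} {res : Pt → Type*} [∀ P, Field (res P)]
  [∀ P, Algebra k (res P)]

theorem divDeg_eq_sum (D : Pt →₀ ℤ) :
    divDeg k res D = D.sum fun P n => (Module.finrank k (res P) : ℤ) * n :=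
  finsum_eq_sum_of_support_subset _ fun _ h => by
    simpa using right_ne_zero_of_mul h

theorem divDeg_sub (D E : Pt →₀ ℤ) :
    divDeg k res (D - E) = divDeg k res D - divDeg k res E := by
  simp only [divDeg_eq_sum]
  exact Finsupp.sum_sub_index fun _ => mul_sub _

theorem divDeg_add (D E : Pt →₀ ℤ) :
    divDeg k res (D + E) = divDeg k res D + divDeg k res E := by
  rw [← sub_eq_iff_eq_add, ← divDeg_sub, add_sub_cancel_right]

theorem divDeg_single (P : Pt) (n : ℤ) :
    divDeg k res (Finsupp.single P n) = Module.finrank k (res P) * n := by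
  rw [divDeg_eq_sum, Finsupp.sum_single_index (mul_zero _)]

theorem divDeg_nonneg {D : Pt →₀ ℤ} (hD : 0 ≤ D) : 0 ≤ divDeg k res D :=
  finsum_nonneg fun P => mul_nonneg (Int.natCast_nonneg _) (hD P)

theorem finrank_le_divDeg {D : Pt →₀ ℤ} (hD : 0 ≤ D) {P : Pt} (hP : D P ≠ 0) :
    (Module.finrank k (res P) : ℤ) ≤ divDeg k res D := by
  have hsub : 0 ≤ D - Finsupp.single P 1 := fun Q => by
    have hQ : 0 ≤ D Q := hD Q
    obtain rfl | hQP := eq_or_ne Q P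
    · simp only [Finsupp.coe_zero, Pi.zero_apply, Finsupp.sub_apply, Finsupp.single_eq_same]
      lia
    · simpa [Finsupp.single_eq_of_ne hQP] using hQ
  have h := divDeg_nonneg (k := k) (res := res) hsub
  rw [divDeg_sub, divDeg_single] at h
  linarith

theorem mem_of_mem_supported {A : AddSubgroup (Pt →₀ ℤ)} {S : Set Pt}
    (hA : ∀ P ∈ S, Finsupp.single P 1 ∈ A) {D : Pt →₀ ℤ} (hD : D ∈ Finsupp.supported ℤ ℤ S) :
    D ∈ A := by
  rw [Finsupp.supported_eq_span_single] at hD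
  exact (Submodule.span_le (p := A.toIntSubmodule)).2 (Set.image_subset_iff.2 hA) hD

end Divisors

section ProjCurve

variable {k F : Type*} [Field k] [Field F] [Algebra k F]
  {Pt : Type*} {res : Pt → Type*} [∀ P, Field (res P)] [∀ P, Algebra k (res P)]
  {ord : Pt → F → ℤ} {ev : ∀ P, F → res P}
  {L : (Pt →₀ ℤ) → Submodule k F} {t : ℕ}

section SupportedFunctions

/-- The points of degree less than `e`, together with the base point `O`. -/
def lowPoints (k : Type*) [Field k] {Pt : Type*} (res : Pt → Type*) [∀ P, Field (res P)]
    [∀ P, Algebra k (res P)] (O : Pt) (e : ℕ) : Set Pt :=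
  {P | P = O ∨ Module.finrank k (res P) < e}

/-- The points of degree exactly `e`, other than the base point `O`. -/
def levelPoints (k : Type*) [Field k] {Pt : Type*} (res : Pt → Type*) [∀ P, Field (res P)]
    [∀ P, Algebra k (res P)] (O : Pt) (e : ℕ) : Set Pt :=
  {P | P ≠ O ∧ Module.finrank k (res P) = e}

theorem lowPoints_mono (O : Pt) {d e : ℕ} (h : d ≤ e) :
    lowPoints k res O d ⊆ lowPoints k res O e :=
  fun _ => Or.imp_right fun hP => hP.trans_le h

theorem lowPoints_succ (O : Pt) (e : ℕ) :
    lowPoints k res O (e + 1) = lowPoints k res O e ∪ levelPoints k res O e := by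
  ext P
  simp only [lowPoints, levelPoints, Set.mem_ofPred_eq, Set.mem_union]
  grind

theorem levelPoints_subset_compl_lowPoints (O : Pt) (e : ℕ) :
    levelPoints k res O e ⊆ (lowPoints k res O e)ᶜ :=
  fun _ hP h => h.elim hP.1 hP.2.not_lt

theorem mem_supported_lowPoints_of_divDeg_lt {D : Pt →₀ ℤ} (hD : 0 ≤ D) (O : Pt) {e : ℕ}
    (h : divDeg k res D < e) : D ∈ Finsupp.supported ℤ ℤ (lowPoints k res O e) :=
  (Finsupp.mem_supported ℤ D).2 fun P hP => Or.inr <| by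
    have := finrank_le_divDeg (k := k) (res := res) hD (Finsupp.mem_support_iff.1 hP)
    omega

theorem single_mem_supported_lowPoints (O : Pt) (e : ℕ) (n : ℤ) :
    Finsupp.single O n ∈ Finsupp.supported ℤ ℤ (lowPoints k res O e) :=
  Finsupp.single_mem_supported ℤ n (Or.inl rfl)

namespace IsProjCurve

variable (hC : IsProjCurve k F res ord ev L t)

include hC in
theorem finrank_pos (P : Pt) : 0 < Module.finrank k (res P) :=
  haveI := hC.finiteDimensional_res P
  Module.finrank_pos

/-- The divisor of a nonzero function. -/
def divisor (f : Fˣ) : Pt →₀ ℤ :=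
  Finsupp.ofSupportFinite (fun P => ord P (f : F)) (hC.support_finite f f.ne_zero)

theorem divisor_apply (f : Fˣ) (P : Pt) : hC.divisor f P = ord P (f : F) := rfl

theorem divDeg_divisor (f : Fˣ) : divDeg k res (hC.divisor f) = 0 :=
  hC.degree_formula f f.ne_zero

theorem divisor_mul (f g : Fˣ) : hC.divisor (f * g) = hC.divisor f + hC.divisor g :=
  Finsupp.ext fun P => hC.ord_mul P f g f.ne_zero g.ne_zero

theorem divisor_one : hC.divisor 1 = 0 := by
  simpa using hC.divisor_mul 1 1

theorem divisor_inv (f : Fˣ) : hC.divisor f⁻¹ = -hC.divisor f :=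
  eq_neg_of_add_eq_zero_left (by rw [← divisor_mul, inv_mul_cancel, divisor_one])

theorem divisor_div (f g : Fˣ) : hC.divisor (f / g) = hC.divisor f - hC.divisor g := by
  rw [div_eq_mul_inv, divisor_mul, divisor_inv, sub_eq_add_neg]

theorem divisor_neg_one : hC.divisor (-1) = 0 :=
  Finsupp.ext fun P => by simpa [divisor_apply] using hC.ord_algebraMap P (-1) (by simp)

theorem mem_L_iff {D : Pt →₀ ℤ} {f : Fˣ} : (f : F) ∈ L D ↔ 0 ≤ hC.divisor f + D := by
  simp only [hC.mem_L, ne_eq, f.ne_zero, not_false_eq_true, forall_const, Finsupp.le_def,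
    Finsupp.add_apply, divisor_apply, add_comm, Finsupp.coe_zero, Pi.zero_apply]

include hC in
theorem L_mono {D E : Pt →₀ ℤ} (h : D ≤ E) : L D ≤ L E := by
  intro f hf
  rw [hC.mem_L] at hf ⊢
  exact fun h0 P => (hf h0 P).trans (add_le_add_left (h P) _)

include hC in
theorem mul_mem_L {D E : Pt →₀ ℤ} {f g : Fˣ} (hf : (f : F) ∈ L D) (hg : (g : F) ∈ L E) :
    ((f * g : Fˣ) : F) ∈ L (D + E) := by
  rw [hC.mem_L_iff] at hf hg ⊢
  rw [divisor_mul, add_add_add_comm]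
  exact add_nonneg hf hg

/-- The nonzero functions all of whose zeros and poles lie in `S`. -/
def supportedUnits (S : Set Pt) : Subgroup Fˣ where
  carrier := {f | hC.divisor f ∈ Finsupp.supported ℤ ℤ S}
  one_mem' := by
    rw [Set.mem_ofPred_eq, divisor_one]
    exact zero_mem _
  mul_mem' {f g} hf hg := by
    rw [Set.mem_ofPred_eq, divisor_mul]
    exact add_mem hf hg
  inv_mem' {f} hf := by
    rw [Set.mem_ofPred_eq, divisor_inv]
    exact neg_mem hf

theorem mem_supportedUnits {S : Set Pt} {f : Fˣ} :
    f ∈ hC.supportedUnits S ↔ hC.divisor f ∈ Finsupp.supported ℤ ℤ S := Iff.rfl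

theorem mem_supportedUnits_iff_ord {S : Set Pt} {f : Fˣ} :
    f ∈ hC.supportedUnits S ↔ ∀ P ∉ S, ord P (f : F) = 0 :=
  Finsupp.mem_supported' ℤ _

theorem supportedUnits_mono {S S' : Set Pt} (h : S ⊆ S') :
    hC.supportedUnits S ≤ hC.supportedUnits S' :=
  fun _ hf => Finsupp.supported_mono (M := ℤ) (R := ℤ) h hf

theorem neg_mem_supportedUnits {S : Set Pt} {f : Fˣ} (hf : f ∈ hC.supportedUnits S) :
    -f ∈ hC.supportedUnits S := by
  rwa [← neg_one_mul, mem_supportedUnits, divisor_mul, divisor_neg_one, zero_add]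

/-- The subgroup of `K₂` generated by the symbols of functions with zeros and poles in `S`. -/
def supportedSymbols (S : Set Pt) : AddSubgroup (K2 F) :=
  AddSubgroup.closure {x | ∃ f ∈ hC.supportedUnits S, ∃ g ∈ hC.supportedUnits S, x = symbol f g}

theorem symbol_mem_supportedSymbols {S : Set Pt} {f g : Fˣ} (hf : f ∈ hC.supportedUnits S)
    (hg : g ∈ hC.supportedUnits S) : symbol f g ∈ hC.supportedSymbols S :=
  AddSubgroup.subset_closure ⟨f, hf, g, hg, rfl⟩

theorem supportedSymbols_mono {S S' : Set Pt} (h : S ⊆ S') :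
    hC.supportedSymbols S ≤ hC.supportedSymbols S' :=
  AddSubgroup.closure_mono fun _ ⟨f, hf, g, hg, hx⟩ =>
    ⟨f, hC.supportedUnits_mono h hf, g, hC.supportedUnits_mono h hg, hx⟩

/-- The value at `P` of functions without zero or pole at `P`, as a group homomorphism. -/
def residueHom {S : Set Pt} {P : Pt} (hP : P ∉ S) : hC.supportedUnits S →* (res P)ˣ :=
  have ord_eq_zero (f : hC.supportedUnits S) : ord P (f.1 : F) = 0 :=
    hC.mem_supportedUnits_iff_ord.1 f.2 P hP
  MonoidHom.mk'
    (fun f => Units.mk0 (ev P (f.1 : F)) fun h =>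
      ((hC.ev_eq_zero_iff P f.1 f.1.ne_zero (ord_eq_zero f).ge).1 h).ne' (ord_eq_zero f))
    fun f g => Units.ext <|
      hC.ev_mul P f.1 g.1 f.1.ne_zero g.1.ne_zero (ord_eq_zero f).ge (ord_eq_zero g).ge

theorem coe_residueHom {S : Set Pt} {P : Pt} (hP : P ∉ S) (f : hC.supportedUnits S) :
    (hC.residueHom hP f : res P) = ev P (f.1 : F) := rfl

/-- The nonzero functions whose zeros and poles, apart from `O`, have degree less than `e`. -/
abbrev lowUnits (O : Pt) (e : ℕ) : Subgroup Fˣ := hC.supportedUnits (lowPoints k res O e)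

/-- The subgroup of `K₂` generated by the symbols of functions whose zeros and poles, apart from
`O`, have degree less than `e`. -/
abbrev lowSymbols (O : Pt) (e : ℕ) : AddSubgroup (K2 F) :=
  hC.supportedSymbols (lowPoints k res O e)

/-- The value of a low function at a point of degree `e`. -/
abbrev levelResidue {O P : Pt} {e : ℕ} (hP : P ∈ levelPoints k res O e) :
    hC.lowUnits O e →* (res P)ˣ :=
  hC.residueHom (levelPoints_subset_compl_lowPoints O e hP)

end IsProjCurve

end SupportedFunctions

section PolesAtBasePoint

namespace IsProjCurve

variable (hC : IsProjCurve k F res ord ev L t) {O P : Pt} {e : ℕ} {m n N : ℤ}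

local notation "𝓛" n:max => L (Finsupp.single O n)

/-- Evaluation at `P` as a linear map on the functions whose only pole is at `O`. -/
def evalL (hC : IsProjCurve k F res ord ev L t) (hP : P ≠ O) (n : ℤ) : 𝓛 n →ₗ[k] res P :=
  have ord_nonneg (f : 𝓛 n) (hf : (f : F) ≠ 0) : 0 ≤ ord P (f : F) := by
    simpa [Finsupp.single_eq_of_ne hP] using (hC.mem_L _ _).1 f.2 hf P
  { toFun := fun f => ev P f
    map_add' := fun f g => by
      by_cases hf : (f : F) = 0
      · simp [hf, hC.ev_zero]
      by_cases hg : (g : F) = 0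
      · simp [hg, hC.ev_zero]
      exact hC.ev_add P f g hf hg (ord_nonneg f hf) (ord_nonneg g hg)
    map_smul' := fun c f => by
      by_cases hc : c = 0
      · simp [hc, hC.ev_zero]
      by_cases hf : (f : F) = 0
      · simp [hf, hC.ev_zero]
      simp only [Submodule.coe_smul, Algebra.smul_def, RingHom.id_apply]
      rw [hC.ev_mul P _ _ (by simpa using hc) hf (hC.ord_algebraMap P c hc).ge (ord_nonneg f hf),
        hC.ev_algebraMap] }

theorem evalL_apply (hP : P ≠ O) (f : 𝓛 n) : hC.evalL hP n f = ev P (f : F) := rfl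

include hC

theorem L_single_mono (h : m ≤ n) : 𝓛 m ≤ 𝓛 n :=
  hC.L_mono (Finsupp.single_mono h)

theorem mul_mem_L_single {f g : Fˣ} (hf : (f : F) ∈ 𝓛 m) (hg : (g : F) ∈ 𝓛 n)
    (hN : m + n ≤ N) : ((f * g : Fˣ) : F) ∈ 𝓛 N :=
  hC.L_single_mono hN (Finsupp.single_add O m n ▸ hC.mul_mem_L hf hg)

variable (hO : Module.finrank k (res O) = 1)

include hO

theorem mem_L_single_of_divisor_eq {f : Fˣ} {D : Pt →₀ ℤ} {c : ℤ} (hD : 0 ≤ D)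
    (hDn : divDeg k res D ≤ n) (hf : hC.divisor f = D + Finsupp.single O c) : (f : F) ∈ 𝓛 n := by
  have hdeg := hC.divDeg_divisor f
  rw [hf, divDeg_add, divDeg_single, hO, Nat.cast_one, one_mul] at hdeg
  rw [hC.mem_L_iff, hf, add_assoc, ← Finsupp.single_add]
  exact add_nonneg hD (Finsupp.single_nonneg.2 (by linarith))

theorem mem_lowUnits_of_mem_L {f : Fˣ} (hf : (f : F) ∈ 𝓛 n) (hn : n < e) :
    f ∈ hC.lowUnits O e := by
  have hdeg : divDeg k res (hC.divisor f + Finsupp.single O n) < e := by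
    rwa [divDeg_add, hC.divDeg_divisor, divDeg_single, hO, Nat.cast_one, one_mul, zero_add]
  have hsub := sub_mem (mem_supported_lowPoints_of_divDeg_lt (hC.mem_L_iff.1 hf) O hdeg)
    (single_mem_supported_lowPoints (k := k) (res := res) O e n)
  rwa [add_sub_cancel_right] at hsub

theorem exists_divisor_eq_add_sub (D : Pt →₀ ℤ) :
    ∃ (u : Fˣ) (E : Pt →₀ ℤ), 0 ≤ E ∧ divDeg k res E = t ∧
      hC.divisor u = D + E - Finsupp.single O (divDeg k res D + t) := by
  set A := Finsupp.single O (divDeg k res D + t) - D with hA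
  have hdegA : divDeg k res A = t := by
    rw [divDeg_sub, divDeg_single, hO]
    ring
  have hrr := hC.rr_ineq A
  have := hC.finiteDimensional_L A
  obtain ⟨u, huA, hu⟩ := Submodule.exists_mem_ne_zero_of_ne_bot
    (Submodule.one_le_finrank_iff.1 (show 1 ≤ Module.finrank k (L A) by omega))
  lift u to Fˣ using hu.isUnit
  refine ⟨u, hC.divisor u + A, hC.mem_L_iff.1 huA, ?_, by rw [hA]; abel⟩
  rw [divDeg_add, hC.divDeg_divisor, hdegA, zero_add]

theorem evalL_injective (hP : P ∈ levelPoints k res O e) (hn : n < e) :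
    Function.Injective (hC.evalL hP.1 n) := by
  rw [injective_iff_map_eq_zero]
  rintro ⟨f, hf⟩ hfP
  by_contra hne
  lift f to Fˣ using (show f ≠ 0 from fun h => hne (Subtype.ext h)).isUnit
  exact (hC.levelResidue hP ⟨f, hC.mem_lowUnits_of_mem_L hO hf hn⟩).ne_zero hfP

theorem le_finrank_range_evalL (hP : P ∈ levelPoints k res O e) (hn : n < e) :
    n + 1 ≤ (Module.finrank k (LinearMap.range (hC.evalL hP.1 n)) : ℤ) + t := by
  have := hC.rr_ineq (Finsupp.single O n)
  rw [LinearMap.finrank_range_of_inj (hC.evalL_injective hO hP hn)]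
  rw [divDeg_single, hO, Nat.cast_one, one_mul] at this
  linarith

theorem exists_levelResidue_eq_of_mem_range_evalL (hP : P ∈ levelPoints k res O e) (hn : n < e)
    (y : (res P)ˣ) (hy : (y : res P) ∈ LinearMap.range (hC.evalL hP.1 n)) :
    ∃ f : hC.lowUnits O e, (f.1 : F) ∈ 𝓛 n ∧ hC.levelResidue hP f = y := by
  obtain ⟨⟨f, hf⟩, hfy⟩ := hy
  have hf0 : f ≠ 0 := by
    rintro rfl
    exact y.ne_zero (hfy.symm.trans (hC.ev_zero P))
  lift f to Fˣ using hf0.isUnit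
  exact ⟨⟨f, hC.mem_lowUnits_of_mem_L hO hf hn⟩, hf, Units.ext hfy⟩

theorem exists_levelResidue_div_eq (hP : P ∈ levelPoints k res O e) (ht : 3 * t < e)
    (y : (res P)ˣ) :
    ∃ a b : hC.lowUnits O e, (a.1 : F) ∈ 𝓛(e - 1) ∧ (b.1 : F) ∈ 𝓛(2 * t) ∧
      hC.levelResidue hP (a / b) = y := by
  have := hC.finiteDimensional_res P
  have hV := hC.le_finrank_range_evalL hO hP (n := e - 1) (by omega)
  have hU := hC.le_finrank_range_evalL hO hP (n := 2 * t) (by omega)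
  have hPe := hP.2
  obtain ⟨β, hβU, hβ, hβV⟩ := exists_mul_mem (U := LinearMap.range (hC.evalL hP.1 (2 * t)))
    (V := LinearMap.range (hC.evalL hP.1 (e - 1))) y.ne_zero (by omega)
  lift β to (res P)ˣ using hβ.isUnit
  obtain ⟨b, hb, rfl⟩ :=
    hC.exists_levelResidue_eq_of_mem_range_evalL hO hP (by omega) β hβU
  obtain ⟨a, ha, hab⟩ :=
    hC.exists_levelResidue_eq_of_mem_range_evalL hO hP (by omega) (y * _) hβV
  exact ⟨a, b, ha, hb, by rw [map_div, hab, mul_div_cancel_right]⟩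

theorem exists_levelResidue_div_eq_div_eq (hP : P ∈ levelPoints k res O e) (ht : 3 * t < e)
    (y z : (res P)ˣ) :
    ∃ a b c : hC.lowUnits O e, (a.1 : F) ∈ 𝓛(e - 1) ∧ (b.1 : F) ∈ 𝓛(e - 1) ∧
      (c.1 : F) ∈ 𝓛(e - 1) ∧ hC.levelResidue hP (a / b) = y ∧ hC.levelResidue hP (b / c) = z := by
  have := hC.finiteDimensional_res P
  set V := LinearMap.range (hC.evalL hP.1 (e - 1))
  have hV : (e : ℤ) - 1 + 1 ≤ (Module.finrank k V : ℤ) + t :=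
    hC.le_finrank_range_evalL hO hP (by omega)
  have hPe := hP.2
  obtain ⟨β, hβU, hβ, hβV, hβW⟩ := exists_mul_mem_mul_mem (U := V) (V := V) (W := V)
    y.ne_zero z⁻¹.ne_zero (by omega)
  lift β to (res P)ˣ using hβ.isUnit
  have lift_mem (x : (res P)ˣ) (hx : (x : res P) ∈ V) :=
    hC.exists_levelResidue_eq_of_mem_range_evalL hO hP (by omega) x hx
  obtain ⟨b, hb, rfl⟩ := lift_mem β hβU
  obtain ⟨a, ha, hab⟩ := lift_mem (y * _) hβV
  obtain ⟨c, hc, hbc⟩ := lift_mem (z⁻¹ * _) hβW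
  refine ⟨a, b, c, ha, hb, hc, ?_, ?_⟩
  · rw [map_div, hab, mul_div_cancel_right]
  · rw [map_div, hbc, div_mul_cancel_right, inv_inv]

end IsProjCurve

end PolesAtBasePoint

section Generators

namespace IsProjCurve

variable (hC : IsProjCurve k F res ord ev L t) (O : Pt) (e : ℕ)

/-- The low functions lying in `L ((e + t) O)`, which generate all low functions when
`3 * t < e`. -/
def smallLowUnits : Set Fˣ :=
  {f | f ∈ hC.lowUnits O e ∧ (f : F) ∈ L (Finsupp.single O (e + t))}

/-- `D` is reducible when some product `u` of small low functions and their inverses has divisor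
`D - E + c O` with `E` effective of degree `t`. The reducible divisors form a group, so it is enough
to reduce the points one at a time. -/
def IsReducible (D : Pt →₀ ℤ) : Prop :=
  ∃ u ∈ Subgroup.closure (hC.smallLowUnits O e), ∃ (E : Pt →₀ ℤ) (c : ℤ),
    0 ≤ E ∧ divDeg k res E = t ∧ hC.divisor u = D - E + Finsupp.single O c

variable {O e} {P : Pt} (hO : Module.finrank k (res O) = 1)

include hO

theorem mem_smallLowUnits_of_divisor_eq {f : Fˣ} {D : Pt →₀ ℤ} {c : ℤ} (hD : 0 ≤ D)
    (hDe : divDeg k res D < e) (hf : hC.divisor f = D + Finsupp.single O c) :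
    f ∈ hC.smallLowUnits O e :=
  ⟨hC.mem_lowUnits_of_mem_L hO (hC.mem_L_single_of_divisor_eq hO hD le_rfl hf) hDe,
    hC.mem_L_single_of_divisor_eq hO hD (by omega) hf⟩

theorem exists_mem_smallLowUnits (ht : 3 * t < e) {E : Pt →₀ ℤ} (hE : 0 ≤ E)
    (hEt : divDeg k res E = t) :
    ∃ v ∈ hC.smallLowUnits O e, ∃ E' : Pt →₀ ℤ, 0 ≤ E' ∧ divDeg k res E' = t ∧
      hC.divisor v = E + E' - Finsupp.single O (2 * t : ℤ) := by
  obtain ⟨v, E', hE', hEt', hv⟩ := hC.exists_divisor_eq_add_sub hO E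
  rw [hEt, ← two_mul] at hv
  refine ⟨v, hC.mem_smallLowUnits_of_divisor_eq hO (add_nonneg hE hE') ?_
    (hv.trans (by rw [sub_eq_add_neg, ← Finsupp.single_neg])), E', hE', hEt', hv⟩
  rw [divDeg_add]
  omega

theorem mem_closure_smallLowUnits_of_divisor_eq_sub (ht : 3 * t < e) {w : Fˣ} {D E : Pt →₀ ℤ}
    {c : ℤ} (hD : 0 ≤ D) (hDt : divDeg k res D ≤ 2 * t) (hE : 0 ≤ E) (hEt : divDeg k res E = t)
    (hw : hC.divisor w = D - E + Finsupp.single O c) :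
    w ∈ Subgroup.closure (hC.smallLowUnits O e) := by
  obtain ⟨v, hv_mem, E', hE', hEt', hv⟩ := hC.exists_mem_smallLowUnits hO ht hE hEt
  have hwv_mem : w * v ∈ hC.smallLowUnits O e := by
    refine hC.mem_smallLowUnits_of_divisor_eq hO (D := D + E') (c := c - 2 * t)
      (add_nonneg hD hE') ?_ ?_
    · rw [divDeg_add]
      omega
    · rw [divisor_mul, hw, hv, Finsupp.single_sub]
      abel
  rw [← mul_div_cancel_right w v]
  exact div_mem (Subgroup.subset_closure hwv_mem) (Subgroup.subset_closure hv_mem)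

theorem isReducible_of_divisor_eq_add (ht : 3 * t < e) {u : Fˣ}
    (hu : u ∈ Subgroup.closure (hC.smallLowUnits O e)) {D E : Pt →₀ ℤ} {c : ℤ} (hE : 0 ≤ E)
    (hEt : divDeg k res E = t) (hdiv : hC.divisor u = D + E + Finsupp.single O c) :
    hC.IsReducible O e D := by
  obtain ⟨v, hv_mem, E', hE', hEt', hv⟩ := hC.exists_mem_smallLowUnits hO ht hE hEt
  refine ⟨u / v, div_mem hu (Subgroup.subset_closure hv_mem), E', c + 2 * t,
    hE', hEt', ?_⟩
  rw [divisor_div, hdiv, hv, Finsupp.single_add O c]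
  abel

theorem isReducible_zero (ht : 3 * t < e) : hC.IsReducible O e 0 := by
  refine hC.isReducible_of_divisor_eq_add hO ht (one_mem _) (E := Finsupp.single O t) (c := -t)
    (Finsupp.single_nonneg.2 (Int.natCast_nonneg t)) ?_ ?_
  · rw [divDeg_single, hO, Nat.cast_one, one_mul]
  · rw [divisor_one, zero_add, ← Finsupp.single_add, add_neg_cancel, Finsupp.single_zero]

theorem isReducible_neg (ht : 3 * t < e) {D : Pt →₀ ℤ} (hD : hC.IsReducible O e D) :
    hC.IsReducible O e (-D) := by
  obtain ⟨u, hu, E, c, hE, hEt, hdiv⟩ := hD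
  refine hC.isReducible_of_divisor_eq_add hO ht (inv_mem hu) hE hEt (c := -c) ?_
  rw [divisor_inv, hdiv, Finsupp.single_neg]
  abel

theorem isReducible_add (ht : 3 * t < e) {D D' : Pt →₀ ℤ} (hD : hC.IsReducible O e D)
    (hD' : hC.IsReducible O e D') : hC.IsReducible O e (D + D') := by
  obtain ⟨u, hu, E, c, hE, hEt, hdiv⟩ := hD
  obtain ⟨u', hu', E', c', hE', hEt', hdiv'⟩ := hD'
  obtain ⟨w, E'', hE'', hEt'', hw⟩ := hC.exists_divisor_eq_add_sub hO (-(E + E'))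
  have hw_mem : w⁻¹ ∈ Subgroup.closure (hC.smallLowUnits O e) := by
    refine hC.mem_closure_smallLowUnits_of_divisor_eq_sub hO ht (add_nonneg hE hE') ?_ hE'' hEt''
      (c := divDeg k res (-(E + E')) + t) ?_
    · rw [divDeg_add]
      omega
    · rw [divisor_inv, hw]
      abel
  refine ⟨u * u' * w⁻¹, mul_mem (mul_mem hu hu') hw_mem, E'',
    c + c' + (divDeg k res (-(E + E')) + t), hE'', hEt'', ?_⟩
  rw [divisor_mul, divisor_mul, divisor_inv, hdiv, hdiv', hw, Finsupp.single_add O (c + c'),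
    Finsupp.single_add O c]
  abel

theorem isReducible_single (ht : 3 * t < e) (hP : P ∈ lowPoints k res O e) :
    hC.IsReducible O e (Finsupp.single P 1) := by
  obtain ⟨u, E, hE, hEt, hu⟩ := hC.exists_divisor_eq_add_sub hO (Finsupp.single P 1)
  have hle : Module.finrank k (res P) ≤ e := by
    rcases hP with rfl | hP <;> omega
  rw [sub_eq_add_neg, ← Finsupp.single_neg] at hu
  refine hC.isReducible_of_divisor_eq_add hO ht (Subgroup.subset_closure ⟨?_, ?_⟩) hE hEt hu
  · rw [mem_supportedUnits, hu]
    exact add_mem (add_mem (Finsupp.single_mem_supported ℤ _ hP)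
      (mem_supported_lowPoints_of_divDeg_lt hE O (by omega)))
      (single_mem_supported_lowPoints O e _)
  · refine hC.mem_L_single_of_divisor_eq hO (add_nonneg (by simp) hE) ?_ hu
    rw [divDeg_add, divDeg_single]
    omega

theorem isReducible_of_mem_supported (ht : 3 * t < e) {D : Pt →₀ ℤ}
    (hD : D ∈ Finsupp.supported ℤ ℤ (lowPoints k res O e)) : hC.IsReducible O e D := by
  let reducible : AddSubgroup (Pt →₀ ℤ) :=
    { carrier := {D | hC.IsReducible O e D}
      zero_mem' := hC.isReducible_zero hO ht
      add_mem' := hC.isReducible_add hO ht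
      neg_mem' := hC.isReducible_neg hO ht }
  exact mem_of_mem_supported (A := reducible) (fun P hP => hC.isReducible_single hO ht hP) hD

theorem lowUnits_le_closure_smallLowUnits (ht : 3 * t < e) :
    hC.lowUnits O e ≤ Subgroup.closure (hC.smallLowUnits O e) := by
  intro f hf
  obtain ⟨u, hu, E, c, hE, hEt, hdiv⟩ := hC.isReducible_of_mem_supported hO ht hf
  rw [← div_mul_cancel f u]
  refine mul_mem (hC.mem_closure_smallLowUnits_of_divisor_eq_sub hO ht hE (by omega)
    (E := Finsupp.single O t) (c := t - c) (Finsupp.single_nonneg.2 (Int.natCast_nonneg t)) ?_ ?_)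
    hu
  · rw [divDeg_single, hO, Nat.cast_one, one_mul]
  · rw [divisor_div, hdiv, Finsupp.single_sub]
    abel

end IsProjCurve

end Generators

section Uniformizers

namespace IsProjCurve

/-- A uniformizer at `P` whose other zeros and poles lie in `lowPoints k res O e` and whose pole
at `O` has order at most `e + t`. -/
structure IsLowUniformizer (hC : IsProjCurve k F res ord ev L t) (O : Pt) (e : ℕ) (P : Pt)
    (π : Fˣ) : Prop where
  divisor_sub_mem :
    hC.divisor π - Finsupp.single P 1 ∈ Finsupp.supported ℤ ℤ (lowPoints k res O e)
  mem_L : (π : F) ∈ L (Finsupp.single O (e + t))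

variable {hC : IsProjCurve k F res ord ev L t} {O P : Pt} {e : ℕ} {π : Fˣ}

theorem IsLowUniformizer.ord_self (hπ : hC.IsLowUniformizer O e P π)
    (hP : P ∈ levelPoints k res O e) : ord P (π : F) = 1 := by
  have h := (Finsupp.mem_supported' ℤ _).1 hπ.divisor_sub_mem P
    (levelPoints_subset_compl_lowPoints O e hP)
  rwa [Finsupp.sub_apply, Finsupp.single_eq_same, divisor_apply, sub_eq_zero] at h

theorem IsLowUniformizer.mem_supportedUnits (hπ : hC.IsLowUniformizer O e P π) :
    π ∈ hC.supportedUnits (insert P (lowPoints k res O e)) := by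
  rw [IsProjCurve.mem_supportedUnits, ← sub_add_cancel (hC.divisor π) (Finsupp.single P 1)]
  exact add_mem
    (Finsupp.supported_mono (M := ℤ) (R := ℤ) (Set.subset_insert _ _) hπ.divisor_sub_mem)
    (Finsupp.single_mem_supported ℤ _ (Set.mem_insert _ _))

theorem notMem_insert_lowPoints (hP : P ∈ levelPoints k res O e) {Q : Pt} (hPQ : P ≠ Q) :
    P ∉ insert Q (lowPoints k res O e) :=
  not_or.2 ⟨hPQ, levelPoints_subset_compl_lowPoints O e hP⟩

variable (hC) (hO : Module.finrank k (res O) = 1)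

include hO

theorem exists_isLowUniformizer (hP : P ∈ levelPoints k res O e) (ht : t < e) :
    ∃ π, hC.IsLowUniformizer O e P π := by
  obtain ⟨u, E, hE, hEt, hu⟩ := hC.exists_divisor_eq_add_sub hO (Finsupp.single P 1)
  have hdeg : divDeg k res (Finsupp.single P 1 + E) = e + t := by
    rw [divDeg_add, divDeg_single, hP.2, hEt, mul_one]
  rw [sub_eq_add_neg, ← Finsupp.single_neg] at hu
  refine ⟨u, ?_, hC.mem_L_single_of_divisor_eq hO (add_nonneg (by simp) hE) hdeg.le hu⟩
  rw [hu, add_assoc, add_sub_cancel_left]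
  exact add_mem (mem_supported_lowPoints_of_divDeg_lt hE O (by omega))
    (single_mem_supported_lowPoints O e _)

variable {n : ℤ} (hP : P ∈ levelPoints k res O e)

include hP

theorem div_mem_lowUnits_of_ev_eq_zero (hπ : hC.IsLowUniformizer O e P π) (hn : n < 2 * e)
    {w : Fˣ} (hw : (w : F) ∈ L (Finsupp.single O n)) (hwP : ev P (w : F) = 0) :
    w / π ∈ hC.lowUnits O e := by
  have hpole := hC.mem_L_iff.1 hw
  have hordP : 0 < ord P (w : F) := by
    refine (hC.ev_eq_zero_iff P w w.ne_zero ?_).1 hwP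
    simpa [Finsupp.single_eq_of_ne hP.1, divisor_apply] using hpole P
  have heff : 0 ≤ hC.divisor w + Finsupp.single O n - Finsupp.single P 1 := fun Q => by
    obtain rfl | hQP := eq_or_ne Q P
    · simpa [Finsupp.single_eq_of_ne hP.1, divisor_apply, Order.one_le_iff_pos] using hordP
    · simpa [Finsupp.single_eq_of_ne hQP] using hpole Q
  have hdeg : divDeg k res (hC.divisor w + Finsupp.single O n - Finsupp.single P 1) < e := by
    rw [divDeg_sub, divDeg_add, hC.divDeg_divisor, divDeg_single, divDeg_single, hO, hP.2]
    push_cast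
    linarith
  have hsplit : hC.divisor (w / π) = hC.divisor w + Finsupp.single O n - Finsupp.single P 1 -
      (hC.divisor π - Finsupp.single P 1) - Finsupp.single O n := by
    rw [divisor_div]
    abel
  rw [mem_supportedUnits, hsplit]
  exact sub_mem (sub_mem (mem_supported_lowPoints_of_divDeg_lt heff O hdeg) hπ.divisor_sub_mem)
    (single_mem_supported_lowPoints O e n)

theorem exists_sub_eq_mul (hπ : hC.IsLowUniformizer O e P π) (hn : n < 2 * e) {f g : Fˣ}
    (hf : (f : F) ∈ L (Finsupp.single O n)) (hg : (g : F) ∈ L (Finsupp.single O n))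
    (hfg : ev P (f : F) = ev P (g : F)) (hne : f ≠ g) :
    ∃ u ∈ hC.lowUnits O e, (f : F) - g = π * u := by
  have hev : ev P ((f : F) - g) = 0 := by
    have := map_sub (hC.evalL hP.1 n) ⟨f, hf⟩ ⟨g, hg⟩
    simp only [evalL_apply, AddSubgroupClass.coe_sub] at this
    rw [this, hfg, sub_self]
  obtain ⟨w, hw⟩ := (sub_ne_zero.2 fun h => hne (Units.ext h) : (f : F) - g ≠ 0).isUnit
  refine ⟨w / π, hC.div_mem_lowUnits_of_ev_eq_zero hO hP hπ hn ?_ (by rwa [hw]), ?_⟩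
  · rw [hw]
    exact sub_mem hf hg
  · rw [← hw, ← Units.val_mul, mul_div_cancel]

theorem exists_symbol_div_eq (hπ : hC.IsLowUniformizer O e P π) (hn : n < 2 * e) {f g : Fˣ}
    (hf : (f : F) ∈ L (Finsupp.single O n)) (hg : (g : F) ∈ L (Finsupp.single O n))
    (hfg : ev P (f : F) = ev P (g : F)) (hg_low : g ∈ hC.lowUnits O e) :
    ∃ v ∈ hC.lowUnits O e, symbol (f / g) π = symbol (f / g) v := by
  obtain rfl | hne := eq_or_ne f g
  · exact ⟨1, one_mem _, by rw [div_self', symbol_one_left, symbol_one_left]⟩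
  obtain ⟨u, hu, hsub⟩ := hC.exists_sub_eq_mul hO hP hπ hn hf hg hfg hne
  exact ⟨-g / u, div_mem (hC.neg_mem_supportedUnits hg_low) hu, symbol_div_eq_of_sub_eq_mul hsub⟩

theorem exists_symbol_mul_div_eq (ht : 3 * t < e) (hπ : hC.IsLowUniformizer O e P π) {S : Set Pt}
    (hPS : P ∉ S) (f : hC.supportedUnits S) (hf : (f.1 : F) ∈ L (Finsupp.single O (e + t))) :
    ∃ a b : hC.lowUnits O e, (a.1 : F) ∈ L (Finsupp.single O (e - 1)) ∧
      (b.1 : F) ∈ L (Finsupp.single O (e - 1)) ∧ hC.levelResidue hP (a / b) = hC.residueHom hPS f ∧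
      ∃ v ∈ hC.lowUnits O e, symbol (f.1 * b.1 / a.1) π = symbol (f.1 * b.1 / a.1) v := by
  obtain ⟨a, b, ha, hb, hab⟩ := hC.exists_levelResidue_div_eq hO hP ht (hC.residueHom hPS f)
  refine ⟨a, b, ha, hC.L_single_mono (by omega) hb, hab, ?_⟩
  refine hC.exists_symbol_div_eq hO hP hπ (n := e + 3 * t) (by omega)
    (hC.mul_mem_L_single hf hb (by omega)) (hC.L_single_mono (by omega) ha) ?_ a.2
  have hmul : hC.residueHom hPS f * hC.levelResidue hP b = hC.levelResidue hP a := by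
    rw [← hab, map_div, div_mul_cancel]
  have hord_f := hC.mem_supportedUnits_iff_ord.1 f.2 P hPS
  have hord_b := hC.mem_supportedUnits_iff_ord.1 b.2 P (levelPoints_subset_compl_lowPoints O e hP)
  rw [Units.val_mul, hC.ev_mul P _ _ f.1.ne_zero b.1.ne_zero hord_f.ge hord_b.ge]
  exact congrArg Units.val hmul

end IsProjCurve

end Uniformizers

section TameSection

namespace IsProjCurve

variable (hC : IsProjCurve k F res ord ev L t) {O P : Pt} {e : ℕ} {π : Fˣ}

/-- The class of the symbol `{h, π}` modulo the symbols of low functions. -/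
def symbolMod (O : Pt) (e : ℕ) (π : Fˣ) :
    Additive (hC.lowUnits O e) →+ K2 F ⧸ hC.lowSymbols O e :=
  AddMonoidHom.mk' (fun h => QuotientAddGroup.mk (symbol h.toMul.1 π)) fun f g => by
    rw [toMul_add, Subgroup.coe_mul, symbol_mul_left, QuotientAddGroup.mk_add]

theorem symbolMod_eq_zero_of_symbol_eq {h : hC.lowUnits O e} {v : Fˣ} (hv : v ∈ hC.lowUnits O e)
    (hhv : symbol h.1 π = symbol h.1 v) : hC.symbolMod O e π (.ofMul h) = 0 :=
  (QuotientAddGroup.eq_zero_iff _).2 (hhv ▸ hC.symbol_mem_supportedSymbols h.2 hv)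

variable (hO : Module.finrank k (res O) = 1) (hP : P ∈ levelPoints k res O e)

include hO

theorem symbolMod_div_eq_of_levelResidue_eq (hπ : hC.IsLowUniformizer O e P π)
    {a b a' b' : hC.lowUnits O e} (ha : (a.1 : F) ∈ L (Finsupp.single O (e - 1)))
    (hb : (b.1 : F) ∈ L (Finsupp.single O (e - 1)))
    (ha' : (a'.1 : F) ∈ L (Finsupp.single O (e - 1)))
    (hb' : (b'.1 : F) ∈ L (Finsupp.single O (e - 1)))
    (h : hC.levelResidue hP (a / b) = hC.levelResidue hP (a' / b')) :
    hC.symbolMod O e π (.ofMul (a / b)) = hC.symbolMod O e π (.ofMul (a' / b')) := by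
  rw [map_div, map_div, div_eq_div_iff_mul_eq_mul, ← map_mul, ← map_mul] at h
  obtain ⟨v, hv, hsymbol⟩ := hC.exists_symbol_div_eq hO hP hπ (n := 2 * e - 2) (by omega)
    (f := (a * b').1) (g := (a' * b).1) (hC.mul_mem_L_single ha hb' (by omega))
    (hC.mul_mem_L_single ha' hb (by omega)) (congrArg Units.val h) (a' * b).2
  rw [← sub_eq_zero, ← map_sub, ← ofMul_div, div_div_div_eq]
  rw [mul_comm a' b] at hsymbol
  exact hC.symbolMod_eq_zero_of_symbol_eq hv hsymbol

theorem exists_addHom_levelResidue_div (ht : 3 * t < e) (hπ : hC.IsLowUniformizer O e P π) :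
    ∃ σ : Additive (res P)ˣ →+ K2 F ⧸ hC.lowSymbols O e, ∀ a b : hC.lowUnits O e,
      (a.1 : F) ∈ L (Finsupp.single O (e - 1)) → (b.1 : F) ∈ L (Finsupp.single O (e - 1)) →
      σ (.ofMul (hC.levelResidue hP (a / b))) = hC.symbolMod O e π (.ofMul (a / b)) := by
  have hex (y : (res P)ˣ) : ∃ a b : hC.lowUnits O e,
      (a.1 : F) ∈ L (Finsupp.single O (e - 1)) ∧ (b.1 : F) ∈ L (Finsupp.single O (e - 1)) ∧
      hC.levelResidue hP (a / b) = y := by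
    obtain ⟨a, b, ha, hb, hab⟩ := hC.exists_levelResidue_div_eq hO hP ht y
    exact ⟨a, b, ha, hC.L_single_mono (by omega) hb, hab⟩
  choose num den hnum hden hres using hex
  have hσ (a b : hC.lowUnits O e) (ha : (a.1 : F) ∈ L (Finsupp.single O (e - 1)))
      (hb : (b.1 : F) ∈ L (Finsupp.single O (e - 1))) (y : (res P)ˣ)
      (hab : hC.levelResidue hP (a / b) = y) :
      hC.symbolMod O e π (.ofMul (num y / den y)) = hC.symbolMod O e π (.ofMul (a / b)) :=
    hC.symbolMod_div_eq_of_levelResidue_eq hO hP hπ (hnum y) (hden y) ha hb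
      ((hres y).trans hab.symm)
  refine ⟨AddMonoidHom.mk' (fun y => hC.symbolMod O e π (.ofMul (num y.toMul / den y.toMul)))
    fun y z => ?_, fun a b ha hb => hσ a b ha hb _ rfl⟩
  obtain ⟨a, b, c, ha, hb, hc, hab, hbc⟩ :=
    hC.exists_levelResidue_div_eq_div_eq hO hP ht y.toMul z.toMul
  rw [hσ a b ha hb _ hab, hσ b c hb hc _ hbc, hσ a c ha hc, ← map_add, ← ofMul_mul,
    div_mul_div_cancel]
  rw [toMul_add, ← hab, ← hbc, ← map_mul, div_mul_div_cancel]

theorem exists_addHom_levelResidue (ht : 3 * t < e) (hπ : hC.IsLowUniformizer O e P π) :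
    ∃ σ : Additive (res P)ˣ →+ K2 F ⧸ hC.lowSymbols O e, ∀ h : hC.lowUnits O e,
      σ (.ofMul (hC.levelResidue hP h)) = hC.symbolMod O e π (.ofMul h) := by
  obtain ⟨σ, hσ⟩ := hC.exists_addHom_levelResidue_div hO hP ht hπ
  have hsmall (h : hC.lowUnits O e) (hh : (h.1 : F) ∈ L (Finsupp.single O (e + t))) :
      σ (.ofMul (hC.levelResidue hP h)) = hC.symbolMod O e π (.ofMul h) := by
    obtain ⟨a, b, ha, hb, hab, v, hv, hsymbol⟩ := hC.exists_symbol_mul_div_eq hO hP ht hπ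
      (levelPoints_subset_compl_lowPoints O e hP) h hh
    rw [← hab, hσ a b ha hb, eq_comm, ← sub_eq_zero, ← map_sub, ← ofMul_div, div_div_eq_mul_div]
    exact hC.symbolMod_eq_zero_of_symbol_eq hv hsymbol
  let agree := (σ.comp (MonoidHom.toAdditive (hC.levelResidue hP))).eqLocus (hC.symbolMod O e π)
  have hagree {f : Fˣ} (hf : f ∈ Subgroup.closure (hC.smallLowUnits O e)) :
      ∃ hf : f ∈ hC.lowUnits O e, .ofMul ⟨f, hf⟩ ∈ agree := by
    induction hf using Subgroup.closure_induction with
    | mem f hf => exact ⟨hf.1, hsmall ⟨f, hf.1⟩ hf.2⟩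
    | one => exact ⟨one_mem _, agree.zero_mem⟩
    | mul f g _ _ hf hg => exact ⟨mul_mem hf.1 hg.1, agree.add_mem hf.2 hg.2⟩
    | inv f _ hf => exact ⟨inv_mem hf.1, agree.neg_mem hf.2⟩
  exact ⟨σ, fun h => (hagree (hC.lowUnits_le_closure_smallLowUnits hO ht h.2)).2⟩

end IsProjCurve

end TameSection

section Generation

theorem exists_subset_lowPoints (O : Pt) (s : Finset Pt) : ∃ n, ↑s ⊆ lowPoints k res O n :=
  ⟨s.sup (fun P => Module.finrank k (res P)) + 1, fun _ hP => Or.inr <|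
    Nat.lt_succ_of_le (Finset.le_sup (f := fun P => Module.finrank k (res P)) hP)⟩

namespace IsProjCurve

variable (hC : IsProjCurve k F res ord ev L t) (O : Pt)

theorem exists_mem_lowSymbols (x : K2 F) : ∃ n, x ∈ hC.lowSymbols O n := by
  obtain ⟨x, rfl⟩ := Submodule.Quotient.mk_surjective _ x
  induction x using TensorProduct.induction_on with
  | zero => exact ⟨0, zero_mem _⟩
  | tmul f g =>
    obtain ⟨n, hn⟩ := exists_subset_lowPoints (k := k) (res := res) O (hC.divisor f.toMul).support
    obtain ⟨m, hm⟩ := exists_subset_lowPoints (k := k) (res := res) O (hC.divisor g.toMul).support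
    exact ⟨max n m, hC.symbol_mem_supportedSymbols
      ((Finsupp.mem_supported ℤ _).2 (hn.trans (lowPoints_mono O (le_max_left n m))))
      ((Finsupp.mem_supported ℤ _).2 (hm.trans (lowPoints_mono O (le_max_right n m))))⟩
  | add x y hx hy =>
    obtain ⟨n, hn⟩ := hx
    obtain ⟨m, hm⟩ := hy
    exact ⟨max n m,
      add_mem (hC.supportedSymbols_mono (lowPoints_mono O (le_max_left n m)) hn)
        (hC.supportedSymbols_mono (lowPoints_mono O (le_max_right n m)) hm)⟩

variable {O} {e : ℕ} {π : levelPoints k res O e → Fˣ}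
  (hπ : ∀ P : levelPoints k res O e, hC.IsLowUniformizer O e P (π P))

include hπ

theorem lowUnits_succ_le_closure :
    hC.lowUnits O (e + 1) ≤ Subgroup.closure (hC.lowUnits O e ∪ Set.range π) := by
  intro f hf
  set H := Subgroup.closure (hC.lowUnits O e ∪ Set.range π)
  let A : AddSubgroup (Pt →₀ ℤ) :=
    { carrier := {D | ∃ u ∈ H, D - hC.divisor u ∈ Finsupp.supported ℤ ℤ (lowPoints k res O e)}
      zero_mem' := ⟨1, one_mem H, by simp [divisor_one]⟩
      add_mem' := fun ⟨u, hu, hD⟩ ⟨v, hv, hE⟩ => ⟨u * v, mul_mem hu hv, by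
        rw [divisor_mul, add_sub_add_comm]
        exact add_mem hD hE⟩
      neg_mem' := fun ⟨u, hu, hD⟩ => ⟨u⁻¹, inv_mem hu, by
        rw [divisor_inv, ← neg_sub']
        exact neg_mem hD⟩ }
  have hA : ∀ P ∈ lowPoints k res O (e + 1), Finsupp.single P 1 ∈ A := by
    rw [lowPoints_succ]
    rintro P (hP | hP)
    · exact ⟨1, one_mem H, by
        rw [divisor_one, sub_zero]
        exact Finsupp.single_mem_supported ℤ 1 hP⟩
    · exact ⟨π ⟨P, hP⟩, Subgroup.subset_closure (Or.inr ⟨_, rfl⟩), by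
        rw [← neg_sub]
        exact neg_mem (hπ ⟨P, hP⟩).divisor_sub_mem⟩
  obtain ⟨u, hu, hfu⟩ := mem_of_mem_supported hA hf
  rw [← divisor_div] at hfu
  rw [← div_mul_cancel f u]
  exact mul_mem (Subgroup.subset_closure (Or.inl hfu)) hu

variable {X : AddSubgroup (K2 F)} (hlow : hC.lowSymbols O e ≤ X)
  (hX : ∀ h ∈ hC.lowUnits O e, ∀ P, symbol h (π P) ∈ X)

include hlow hX

theorem symbol_uniformizer_mem (hO : Module.finrank k (res O) = 1) (ht : 3 * t < e)
    (P Q : levelPoints k res O e) : symbol (π P) (π Q) ∈ X := by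
  have hX' {h : Fˣ} (hh : h ∈ hC.lowUnits O e) (R) : symbol (π R) h ∈ X := by
    rw [symbol_swap]
    exact neg_mem (hX h hh R)
  obtain rfl | hPQ := eq_or_ne Q P
  · rw [symbol_self]
    exact hX' (hC.neg_mem_supportedUnits (one_mem _)) Q
  obtain ⟨a, b, -, -, -, v, hv, h⟩ := hC.exists_symbol_mul_div_eq hO Q.2 ht (hπ Q)
    (notMem_insert_lowPoints Q.2 (Subtype.coe_ne_coe.2 hPQ)) ⟨π P, (hπ P).mem_supportedUnits⟩
    (hπ P).mem_L
  have hba := div_mem b.2 a.2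
  rw [mul_div_assoc, symbol_mul_left, symbol_mul_left] at h
  rw [eq_sub_of_add_eq h]
  exact sub_mem (add_mem (hX' hv P) (hlow (hC.symbol_mem_supportedSymbols hba hv))) (hX _ hba Q)

theorem lowSymbols_succ_le (hO : Module.finrank k (res O) = 1) (ht : 3 * t < e) :
    hC.lowSymbols O (e + 1) ≤ X := by
  refine (AddSubgroup.closure_le _).2 ?_
  rintro _ ⟨f, hf, g, hg, rfl⟩
  refine symbol_mem_of_mem_closure ?_ (hC.lowUnits_succ_le_closure hπ hf)
    (hC.lowUnits_succ_le_closure hπ hg)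
  rintro f (hf | ⟨P, rfl⟩) g (hg | ⟨Q, rfl⟩)
  · exact hlow (hC.symbol_mem_supportedSymbols hf hg)
  · exact hX f hf Q
  · rw [symbol_swap]
    exact neg_mem (hX g hg P)
  · exact hC.symbol_uniformizer_mem hπ hlow hX hO ht P Q

end IsProjCurve

end Generation

section Filtration

namespace IsProjCurve

variable (hC : IsProjCurve k F res ord ev L t) {O : Pt} (hO : Module.finrank k (res O) = 1)
  {e : ℕ}

include hO

theorem finrank_lt_of_mem_lowUnits {f : Fˣ} (hf : f ∈ hC.lowUnits O e) {P : Pt}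
    (hP : ord P (f : F) ≠ 0) : Module.finrank k (res P) < e := by
  obtain rfl | hPe := (Finsupp.mem_supported ℤ _).1 hf (Finsupp.mem_support_iff.2 hP)
  · by_contra hlt
    rw [hO] at hlt
    refine hP ?_
    have hord (Q : Pt) (hQ : Q ≠ P) : ord Q (f : F) = 0 :=
      hC.mem_supportedUnits_iff_ord.1 hf Q
        (not_or.2 ⟨hQ, not_lt.2 ((not_lt.1 hlt).trans (hC.finrank_pos Q))⟩)
    have hdeg := hC.degree_formula f f.ne_zero
    rwa [finsum_eq_single _ P fun Q hQ => by rw [hord Q hQ, mul_zero], hO, Nat.cast_one,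
      one_mul] at hdeg
  · exact hPe

theorem Fsub_eq_lowSymbols (he : 0 < e) : Fsub k res ord (e - 1) = hC.lowSymbols O e := by
  have hmem (f : Fˣ) : (∀ P, ord P (f : F) ≠ 0 → Module.finrank k (res P) ≤ e - 1) ↔
      f ∈ hC.lowUnits O e :=
    ⟨fun h => (Finsupp.mem_supported ℤ _).2 fun P hP =>
        Or.inr (Nat.lt_of_le_pred he (h P (Finsupp.mem_support_iff.1 hP))),
      fun hf P hP => Nat.le_pred_of_lt (hC.finrank_lt_of_mem_lowUnits hO hf hP)⟩
  simp only [Fsub, supportedSymbols, hmem]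
  congr 1
  ext x
  simp only [Set.mem_ofPred_eq]
  tauto

end IsProjCurve

end Filtration

section Tame

variable {T : K2 F →+ Π₀ P : Pt, Additive (res P)ˣ}

open scoped Classical in
/-- The components of the tame symbol at the points of `S`. -/
def tameOn (T : K2 F →+ Π₀ P : Pt, Additive (res P)ˣ) (S : Set Pt) :
    K2 F →+ Π₀ P : S, Additive (res P)ˣ :=
  (DFinsupp.subtypeDomainAddMonoidHom (fun P => Additive (res P)ˣ) (· ∈ S)).comp T

theorem tameOn_apply (S : Set Pt) (x : K2 F) (P : S) : tameOn T S x P = T x P := rfl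

namespace IsProjCurve

variable (hC : IsProjCurve k F res ord ev L t) (hT : IsTameSymbol ord ev T)

include hT

theorem tame_symbol_of_ord_eq_one {S : Set Pt} {P : Pt} (hP : P ∉ S) (f : hC.supportedUnits S)
    {g : Fˣ} (hg : ord P (g : F) = 1) :
    T (symbol f.1 g) P = .ofMul (hC.residueHom hP f) := by
  refine Additive.toMul.injective (Units.ext ?_)
  have hf := hC.mem_supportedUnits_iff_ord.1 f.2 P hP
  rw [hT f.1 g P, hf, hg]
  simp [coe_residueHom]

theorem tame_eq_zero_of_mem_supportedSymbols {S : Set Pt} {P : Pt} (hP : P ∉ S) {x : K2 F}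
    (hx : x ∈ hC.supportedSymbols S) : T x P = 0 := by
  induction hx using AddSubgroup.closure_induction with
  | mem x hx =>
    obtain ⟨f, hf, g, hg, rfl⟩ := hx
    have h := hT f g P
    rw [hC.mem_supportedUnits_iff_ord.1 hf P hP, hC.mem_supportedUnits_iff_ord.1 hg P hP] at h
    simp only [mul_zero, zpow_zero, neg_zero, mul_one, Units.val_one, hC.ev_one] at h
    exact congrArg Additive.ofMul (Units.ext h)
  | zero => rw [map_zero, DFinsupp.zero_apply]
  | add x y _ _ hx hy => rw [map_add, DFinsupp.add_apply, hx, hy, add_zero]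
  | neg x _ hx => rw [map_neg, DFinsupp.neg_apply, hx, neg_zero]

variable {O : Pt} {e : ℕ}

theorem tameOn_levelPoints_symbol [DecidableEq (levelPoints k res O e)]
    (P : levelPoints k res O e) {π : Fˣ} (hπ : hC.IsLowUniformizer O e P π)
    (h : hC.lowUnits O e) :
    tameOn T (levelPoints k res O e) (symbol h.1 π) =
      DFinsupp.single P (.ofMul (hC.levelResidue P.2 h)) := by
  ext1 Q
  rw [tameOn_apply]
  obtain rfl | hQP := eq_or_ne Q P
  · rw [DFinsupp.single_eq_same, hC.tame_symbol_of_ord_eq_one hT _ h (hπ.ord_self Q.2)]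
  · rw [DFinsupp.single_eq_of_ne hQP]
    exact hC.tame_eq_zero_of_mem_supportedSymbols hT
      (notMem_insert_lowPoints Q.2 (Subtype.coe_ne_coe.2 hQP)) (hC.symbol_mem_supportedSymbols
        (hC.supportedUnits_mono (Set.subset_insert _ _) h.2) hπ.mem_supportedUnits)

variable (hO : Module.finrank k (res O) = 1)

include hO

theorem exists_addHom_tameOn (ht : 3 * t < e) :
    ∃ τ : (Π₀ P : levelPoints k res O e, Additive (res P)ˣ) →+ K2 F ⧸ hC.lowSymbols O e,
      ∀ x ∈ hC.lowSymbols O (e + 1),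
        τ (tameOn T (levelPoints k res O e) x) = QuotientAddGroup.mk x := by
  classical
  have hex (P : levelPoints k res O e) := hC.exists_isLowUniformizer hO P.2 (by omega)
  choose π hπ using hex
  choose σ hσ using fun P => hC.exists_addHom_levelResidue hO P.2 ht (hπ P)
  refine ⟨DFinsupp.sumAddHom σ, hC.lowSymbols_succ_le hπ (X :=
    ((DFinsupp.sumAddHom σ).comp (tameOn T _)).eqLocus (QuotientAddGroup.mk' _)) ?_ ?_ hO ht⟩
  · intro x hx
    have hTx : tameOn T (levelPoints k res O e) x = 0 := by
      ext1 P
      exact hC.tame_eq_zero_of_mem_supportedSymbols hT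
        (levelPoints_subset_compl_lowPoints O e P.2) hx
    have hx0 : (QuotientAddGroup.mk x : K2 F ⧸ hC.lowSymbols O e) = 0 :=
      (QuotientAddGroup.eq_zero_iff x).2 hx
    change DFinsupp.sumAddHom σ (tameOn T _ x) = QuotientAddGroup.mk x
    rw [hTx, map_zero, hx0]
  · intro h hh P
    change DFinsupp.sumAddHom σ (tameOn T _ (symbol h (π P))) = _
    rw [hC.tameOn_levelPoints_symbol hT P (hπ P) ⟨h, hh⟩, DFinsupp.sumAddHom_single, hσ]
    rfl

theorem mem_lowSymbols_of_mem_succ (ht : 3 * t < e) {x : K2 F}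
    (hx : x ∈ hC.lowSymbols O (e + 1)) (hTx : ∀ P ∈ levelPoints k res O e, T x P = 0) :
    x ∈ hC.lowSymbols O e := by
  obtain ⟨τ, hτ⟩ := hC.exists_addHom_tameOn hT hO ht
  have hzero : tameOn T (levelPoints k res O e) x = 0 := DFinsupp.ext fun P => hTx P P.2
  rw [← QuotientAddGroup.eq_zero_iff, ← hτ x hx, hzero, map_zero]

theorem mem_lowSymbols_iff_tame_eq_zero (ht : 3 * t < e) (x : K2 F) :
    x ∈ hC.lowSymbols O e ↔ ∀ P ∉ lowPoints k res O e, T x P = 0 := by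
  refine ⟨fun hx P hP => hC.tame_eq_zero_of_mem_supportedSymbols hT hP hx, fun hTx => ?_⟩
  obtain ⟨n, hn⟩ := hC.exists_mem_lowSymbols O x
  replace hn : x ∈ hC.lowSymbols O (e + n) :=
    hC.supportedSymbols_mono (lowPoints_mono O (Nat.le_add_left n e)) hn
  induction n with
  | zero => exact hn
  | succ n ih =>
    exact ih (hC.mem_lowSymbols_of_mem_succ hT hO (by omega) hn fun P hP => hTx P fun h =>
      levelPoints_subset_compl_lowPoints O _ hP (lowPoints_mono O (Nat.le_add_right e n) h))

theorem exists_mem_lowSymbols_tameOn_eq (ht : 3 * t < e)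
    (y : Π₀ P : levelPoints k res O e, Additive (res P)ˣ) :
    ∃ x ∈ hC.lowSymbols O (e + 1), tameOn T (levelPoints k res O e) x = y := by
  classical
  change y ∈ (hC.lowSymbols O (e + 1)).map (tameOn T (levelPoints k res O e))
  rw [← DFinsupp.sum_single (f := y)]
  refine sum_mem fun P _ => ?_
  obtain ⟨π, hπ⟩ := hC.exists_isLowUniformizer hO P.2 (by omega)
  obtain ⟨a, b, -, -, hab⟩ := hC.exists_levelResidue_div_eq hO P.2 ht (y P).toMul
  have hπ_mem : π ∈ hC.lowUnits O (e + 1) := by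
    refine hC.supportedUnits_mono ?_ hπ.mem_supportedUnits
    rw [lowPoints_succ]
    exact Set.insert_subset (Or.inr P.2) Set.subset_union_left
  refine ⟨symbol (a / b).1 π, hC.symbol_mem_supportedSymbols
    (hC.supportedUnits_mono (lowPoints_mono O e.le_succ) (a / b).2) hπ_mem, ?_⟩
  rw [hC.tameOn_levelPoints_symbol hT P hπ, hab, ofMul_toMul]

include hC in
theorem exists_tame_eq (ht : 3 * t < e) (y : Π₀ P : Pt, Additive (res P)ˣ) :
    ∃ x, ∀ P ∉ lowPoints k res O e, T x P = y P := by
  classical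
  obtain ⟨n, hn⟩ := exists_subset_lowPoints (k := k) (res := res) O y.support
  replace hn : ∀ P ∉ lowPoints k res O (e + n), y P = 0 := fun P hP => by
    by_contra h
    exact hP (lowPoints_mono O (Nat.le_add_left n e) (hn (DFinsupp.mem_support_iff.2 h)))
  induction n generalizing y with
  | zero => exact ⟨0, fun P hP => by rw [map_zero, DFinsupp.zero_apply, hn P hP]⟩
  | succ n ih =>
    obtain ⟨x, hx, hxy⟩ := hC.exists_mem_lowSymbols_tameOn_eq hT hO (e := e + n) (by omega)
      (y.subtypeDomain (· ∈ levelPoints k res O (e + n)))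
    obtain ⟨x', hx'⟩ := ih (y - T x) fun P hP => by
      rw [DFinsupp.sub_apply, sub_eq_zero]
      by_cases hPn : P ∈ levelPoints k res O (e + n)
      · exact (DFunLike.congr_fun hxy ⟨P, hPn⟩).symm
      · have hP' : P ∉ lowPoints k res O (e + n + 1) := by
          rw [lowPoints_succ]
          exact not_or.2 ⟨hP, hPn⟩
        rw [hn P hP', hC.tame_eq_zero_of_mem_supportedSymbols hT hP' hx]
    exact ⟨x' + x, fun P hP => by
      rw [map_add, DFinsupp.add_apply, hx' P hP, DFinsupp.sub_apply, sub_add_cancel]⟩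

end IsProjCurve

end Tame

end ProjCurve

/-- second isomorphism of Theorem `introker1`.  Let `C` be a regular,
irreducible curve, projective over `k`, with function field `F`, arithmetic genus `t`
and a `k`-rational point `O`.  For every `d ≥ 3t + 1` the tame symbol induces an
isomorphism `K₂(F) / F_{d-1} ≅ ∐_{O ≠ P ∈ C_{≥ d}} k(P)^*`; this is expressed by
saying that the induced map `K₂(F) → ∐_{O ≠ P ∈ C_{≥ d}} k(P)^*` is surjective and
has kernel `F_{d-1}`. -/
theorem statement3 (k F : Type*) [Field k] [Field F] [Algebra k F]
    {Pt : Type*} (res : Pt → Type*) [∀ P, Field (res P)] [∀ P, Algebra k (res P)]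
    (ord : Pt → F → ℤ) (ev : ∀ P, F → res P)
    (L : (Pt →₀ ℤ) → Submodule k F) (t : ℕ)
    (hC : IsProjCurve k F res ord ev L t)
    (O : Pt) (hO : Module.finrank k (res O) = 1)
    (T : K2 F →+ Π₀ P : Pt, Additive ((res P)ˣ)) (hT : IsTameSymbol ord ev T)
    (d : ℕ) (hd : 3 * t + 1 ≤ d) :
    (∀ y : Π₀ P : Pt, Additive ((res P)ˣ),
      ∃ x : K2 F,
        ∀ P, P ≠ O → d ≤ Module.finrank k (res P) → T x P = y P) ∧
    (∀ x : K2 F,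
      ((∀ P, P ≠ O → d ≤ Module.finrank k (res P) → T x P = 0) ↔
        x ∈ Fsub k res ord (d - 1))) := by
  have hmem (P : Pt) :
      P ∉ lowPoints k res O d ↔ P ≠ O ∧ d ≤ Module.finrank k (res P) :=
    not_or.trans (and_congr_right fun _ => not_lt)
  refine ⟨fun y => ?_, fun x => ?_⟩
  · obtain ⟨x, hx⟩ := hC.exists_tame_eq hT hO hd y
    exact ⟨x, fun P hPO hPd => hx P ((hmem P).2 ⟨hPO, hPd⟩)⟩
  · rw [hC.Fsub_eq_lowSymbols hO (by omega), hC.mem_lowSymbols_iff_tame_eq_zero hT hO hd]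
    simp only [hmem, and_imp]

end
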